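/- (Characteristic formulas) Assume the set P of atoms is finite. Then for every n ∈ ℕ, the characteristic formulas χⁿ and πⁿ are well-defined (all conjunctions and disjunctions in their definition are over finite sets of formulas), and for all in-models M, M', worlds w, w', and states s': (1) M,w ⊨ χⁿ_{M',w'} if and only if M,w ∼ₙ M',w'; (2) M,w ⊨ πⁿ_{M',s'} if and only if there exists s ∈ Σ(w) with M,s ∼ₙ M',s'. -/

import Mathlib

/-- Formulas of the inquisitive modal language `L_⟹`. -/
inductive Form (P : Type) : Type
  | atom : P → Form P
  | bot : Form P
  | and : Form P → Form P → Form P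
  | impl : Form P → Form P → Form P
  | idisj : Form P → Form P → Form P
  | yields : Form P → Form P → Form P

/-- An inhabited neighborhood model (in-model). -/
structure InModel (P : Type) where
  W : Type
  ne : Nonempty W
  Nb : W → Set (Set W)
  nb_nonempty : ∀ w, ∀ s ∈ Nb w, s.Nonempty
  V : W → P → Bool

/-- Support of a formula at an information state. -/
def support {P : Type} (M : InModel P) : Form P → Set M.W → Prop
  | .atom p, s => ∀ w ∈ s, M.V w p = true
  | .bot, s => s = ∅
  | .and φ ψ, s => support M φ s ∧ support M ψ s
  | .impl φ ψ, s => ∀ t : Set M.W, t ⊆ s → support M φ t → support M ψ t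
  | .idisj φ ψ, s => support M φ s ∨ support M ψ s
  | .yields φ ψ, s => ∀ w ∈ s, ∀ t ∈ M.Nb w, support M φ t → support M ψ t

/-- Truth at a world: support at the corresponding singleton state. -/
def truth {P : Type} (M : InModel P) (w : M.W) (φ : Form P) : Prop :=
  support M φ {w}

/-- A formula is truth-conditional if support at any state amounts to truth at
every world of the state. -/
def TruthConditional {P : Type} (φ : Form P) : Prop :=
  ∀ (M : InModel P) (s : Set M.W), support M φ s ↔ ∀ w ∈ s, truth M w φ

/-- Logical equivalence: same supporting states in every in-model. -/
def EquivF {P : Type} (φ ψ : Form P) : Prop :=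
  ∀ (M : InModel P) (s : Set M.W), support M φ s ↔ support M ψ s

def Form.neg {P : Type} (φ : Form P) : Form P := .impl φ .bot
def Form.top {P : Type} : Form P := Form.neg .bot
def Form.or {P : Type} (φ ψ : Form P) : Form P := Form.neg (.and (Form.neg φ) (Form.neg ψ))
def Form.box {P : Type} (φ : Form P) : Form P := .yields Form.top φ
def Form.dia {P : Type} (φ : Form P) : Form P := Form.neg (.yields φ .bot)
def Form.quest {P : Type} (φ : Form P) : Form P := .idisj φ (Form.neg φ)

/-- Declaratives: formulas where `⩔` occurs only within the scope of `⟹`. -/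
inductive IsDecl {P : Type} : Form P → Prop
  | atom (p : P) : IsDecl (.atom p)
  | bot : IsDecl .bot
  | and {α β : Form P} : IsDecl α → IsDecl β → IsDecl (.and α β)
  | impl {α β : Form P} : IsDecl α → IsDecl β → IsDecl (.impl α β)
  | yields (φ ψ : Form P) : IsDecl (.yields φ ψ)

/-- Modal depth. -/
def md {P : Type} : Form P → ℕ
  | .atom _ => 0
  | .bot => 0
  | .and φ ψ => max (md φ) (md ψ)
  | .impl φ ψ => max (md φ) (md ψ)
  | .idisj φ ψ => max (md φ) (md ψ)
  | .yields φ ψ => max (md φ) (md ψ) + 1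

/-- Egli-Milner lifting of a relation between worlds to states. -/
def EM {P : Type} {M M' : InModel P} (Z : M.W → M'.W → Prop)
    (s : Set M.W) (s' : Set M'.W) : Prop :=
  (∀ w ∈ s, ∃ w' ∈ s', Z w w') ∧ (∀ w' ∈ s', ∃ w ∈ s, Z w w')

/-- `Z` is an `n`-bisimulation between `M` and `M'` (indices `i ≤ n`). -/
def IsNBisim {P : Type} (M M' : InModel P) (n : ℕ)
    (Z : ℕ → M.W → M'.W → Prop) : Prop :=
  ∀ i ≤ n, ∀ w w', Z i w w' →
    (∀ p : P, M.V w p = M'.V w' p) ∧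
    (∀ j : ℕ, i = j + 1 →
      (∀ s ∈ M.Nb w, ∃ s' ∈ M'.Nb w', EM (Z j) s s') ∧
      (∀ s' ∈ M'.Nb w', ∃ s ∈ M.Nb w, EM (Z j) s s'))

/-- `n`-bisimilarity of world-pointed models. -/
def NBisimW {P : Type} (n : ℕ) (M : InModel P) (w : M.W)
    (M' : InModel P) (w' : M'.W) : Prop :=
  ∃ Z, IsNBisim M M' n Z ∧ Z n w w'

/-- `n`-bisimilarity of state-pointed models. -/
def NBisimS {P : Type} (n : ℕ) (M : InModel P) (s : Set M.W)
    (M' : InModel P) (s' : Set M'.W) : Prop :=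
  ∃ Z, IsNBisim M M' n Z ∧ EM (Z n) s s'

/-- `Z` is a bisimulation between `M` and `M'`. -/
def IsBisim {P : Type} (M M' : InModel P) (Z : M.W → M'.W → Prop) : Prop :=
  (∃ w w', Z w w') ∧
  ∀ w w', Z w w' →
    (∀ p : P, M.V w p = M'.V w' p) ∧
    (∀ s ∈ M.Nb w, ∃ s' ∈ M'.Nb w', EM Z s s') ∧
    (∀ s' ∈ M'.Nb w', ∃ s ∈ M.Nb w, EM Z s s')

/-- Bisimilarity of world-pointed models. -/
def BisimW {P : Type} (M : InModel P) (w : M.W)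
    (M' : InModel P) (w' : M'.W) : Prop :=
  ∃ Z, IsBisim M M' Z ∧ Z w w'

/-- Bisimilarity of state-pointed models. -/
def BisimS {P : Type} (M : InModel P) (s : Set M.W)
    (M' : InModel P) (s' : Set M'.W) : Prop :=
  ∃ Z, IsBisim M M' Z ∧ EM Z s s'

open scoped Classical

def bigAnd {P : Type} : List (Form P) → Form P
  | [] => Form.top
  | [φ] => φ
  | φ :: rest => .and φ (bigAnd rest)

def bigIdisj {P : Type} : List (Form P) → Form P
  | [] => .bot
  | [φ] => φ
  | φ :: rest => .idisj φ (bigIdisj rest)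

def bigOr {P : Type} : List (Form P) → Form P
  | [] => .bot
  | [φ] => φ
  | φ :: rest => Form.or φ (bigOr rest)

/-- Conjunction of a (finite) set of formulas. -/
noncomputable def sAnd {P : Type} (X : Set (Form P)) : Form P :=
  if h : X.Finite then bigAnd h.toFinset.toList else Form.bot

/-- Inquisitive disjunction of a (finite) set of formulas. -/
noncomputable def sIdisj {P : Type} (X : Set (Form P)) : Form P :=
  if h : X.Finite then bigIdisj h.toFinset.toList else Form.bot

/-- Declarative disjunction of a (finite) set of formulas. -/
noncomputable def sOr {P : Type} (X : Set (Form P)) : Form P :=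
  if h : X.Finite then bigOr h.toFinset.toList else Form.bot

/-- `χ⁰_{M,w}`: the conjunction of the literals true at `w`. -/
noncomputable def chiZero {P : Type} [Fintype P] (M : InModel P) (w : M.W) : Form P :=
  bigAnd ((Finset.univ : Finset P).toList.map
    (fun p => if M.V w p then Form.atom p else Form.neg (Form.atom p)))

/-- `πⁿ_{M,s}` built from a family `c` of characteristic formulas:
`¬(⋁{c w : w ∈ s} ⟹ ⩔{¬ c w : w ∈ s})`. -/
noncomputable def piAux {P : Type} (c : ∀ M : InModel P, M.W → Form P)
    (M : InModel P) (s : Set M.W) : Form P :=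
  Form.neg (Form.yields (sOr {f | ∃ w ∈ s, f = c M w})
    (sIdisj {f | ∃ w ∈ s, f = Form.neg (c M w)}))

/-- The characteristic formulas `χⁿ_{M,w}`. -/
noncomputable def chi {P : Type} [Fintype P] : ℕ → ∀ M : InModel P, M.W → Form P
  | 0 => fun M w => chiZero M w
  | n + 1 => fun M w =>
      .and (.and (chiZero M w)
        (sAnd {f | ∃ s ∈ M.Nb w, f = piAux (chi n) M s}))
        (sAnd {f | ∃ (M' : InModel P) (s' : Set M'.W),
          f = Form.neg (piAux (chi n) M' s') ∧ ¬ ∃ s ∈ M.Nb w, NBisimS n M s M' s'})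

/-- The characteristic formulas `πⁿ_{M,s}`. -/
noncomputable def piChar {P : Type} [Fintype P] (n : ℕ) :
    ∀ M : InModel P, Set M.W → Form P :=
  piAux (chi n)

theorem sup_mono {P : Type} (M : InModel P) (φ : Form P) :
    ∀ s t : Set M.W, t ⊆ s → support M φ s → support M φ t := by
  induction φ with
  | atom p => intro s t h hs w hw; exact hs w (h hw)
  | bot => intro s t h hs; simp only [support] at *; subst hs; exact Set.subset_empty_iff.1 h
  | and a b iha ihb => intro s t h hs; exact ⟨iha s t h hs.1, ihb s t h hs.2⟩
  | impl a b iha ihb => intro s t h hs u hu; exact hs u (hu.trans h)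
  | idisj a b iha ihb =>
    intro s t h hs
    rcases hs with hs | hs
    · exact Or.inl (iha s t h hs)
    · exact Or.inr (ihb s t h hs)
  | yields a b iha ihb => intro s t h hs w hw; exact hs w (h hw)

theorem sup_empty {P : Type} (M : InModel P) (φ : Form P) : support M φ ∅ := by
  induction φ with
  | atom p => intro w hw; exact hw.elim
  | bot => rfl
  | and a b iha ihb => exact ⟨iha, ihb⟩
  | impl a b iha ihb => intro u hu _; rw [Set.subset_empty_iff.1 hu]; exact ihb
  | idisj a b iha ihb => exact Or.inl iha
  | yields a b iha ihb => intro w hw; exact hw.elim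

theorem sup_neg {P : Type} (M : InModel P) (φ : Form P) (s : Set M.W) :
    support M (Form.neg φ) s ↔ ∀ w ∈ s, ¬ support M φ {w} := by
  constructor
  · intro h w hw hφ
    exact Set.singleton_ne_empty w (h {w} (Set.singleton_subset_iff.2 hw) hφ)
  · intro h t ht hφ
    by_contra hne
    obtain ⟨w, hw⟩ := Set.nonempty_iff_ne_empty.2 hne
    exact h w (ht hw) (sup_mono M φ t {w} (Set.singleton_subset_iff.2 hw) hφ)

theorem tc_neg {P : Type} (φ : Form P) : TruthConditional (Form.neg φ) := by
  intro M s
  simp only [truth, sup_neg]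
  simp

theorem tc_bot {P : Type} : TruthConditional (Form.bot : Form P) := by
  intro M s
  simp [truth, support, Set.eq_empty_iff_forall_notMem]

theorem tc_atom {P : Type} (p : P) : TruthConditional (Form.atom p) := by
  intro M s
  simp [truth, support]

theorem tc_and {P : Type} {φ ψ : Form P} (h : TruthConditional φ) (h' : TruthConditional ψ) :
    TruthConditional (Form.and φ ψ) := by
  intro M s
  have e : ∀ s, support M (Form.and φ ψ) s ↔ support M φ s ∧ support M ψ s := fun _ => Iff.rfl
  simp only [truth, e]
  rw [h M s, h' M s]
  simp only [truth]
  exact ⟨fun h w hw => ⟨h.1 w hw, h.2 w hw⟩, fun h => ⟨fun w hw => (h w hw).1, fun w hw => (h w hw).2⟩⟩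

theorem sup_bigAnd {P : Type} (M : InModel P) (s : Set M.W) (l : List (Form P)) :
    support M (bigAnd l) s ↔ ∀ φ ∈ l, support M φ s := by
  induction l with
  | nil =>
    simp only [bigAnd, Form.top, sup_neg]
    simp [support]
  | cons a l ih =>
    cases l with
    | nil => simp [bigAnd]
    | cons b l =>
      simp only [bigAnd, support]
      rw [ih]
      simp

theorem sup_bigIdisj {P : Type} (M : InModel P) (s : Set M.W) (l : List (Form P)) :
    support M (bigIdisj l) s ↔ s = ∅ ∨ ∃ φ ∈ l, support M φ s := by
  induction l with
  | nil => simp [bigIdisj, support]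
  | cons a l ih =>
    cases l with
    | nil =>
      simp only [bigIdisj, List.mem_singleton, exists_eq_left]
      exact ⟨Or.inr, fun h => h.elim (fun h => h ▸ sup_empty M a) id⟩
    | cons b l =>
      simp only [bigIdisj, support]
      rw [ih]
      simp only [List.mem_cons, exists_eq_or_imp]
      tauto

theorem sup_bigOr {P : Type} (M : InModel P) (l : List (Form P))
    (hl : ∀ φ ∈ l, TruthConditional φ) (s : Set M.W) :
    support M (bigOr l) s ↔ ∀ w ∈ s, ∃ φ ∈ l, support M φ {w} := by
  induction l generalizing s with
  | nil => simp [bigOr, support, Set.eq_empty_iff_forall_notMem]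
  | cons a l ih =>
    cases l with
    | nil =>
      simp only [bigOr, List.mem_singleton, exists_eq_left]
      exact hl a (by simp) M s
    | cons b l =>
      have ih' := fun s => ih (fun φ h => hl φ (List.mem_cons_of_mem _ h)) s
      have e : ∀ (φ ψ : Form P) s,
        support M (Form.and φ ψ) s ↔ support M φ s ∧ support M ψ s := fun _ _ _ => Iff.rfl
      have e2 : bigOr (a :: b :: l) = Form.or a (bigOr (b :: l)) := rfl
      rw [e2, Form.or, sup_neg]
      refine forall₂_congr fun w hw => ?_
      rw [e, sup_neg, sup_neg]
      simp only [Set.mem_singleton_iff, forall_eq]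
      rw [ih' {w}]
      simp only [Set.mem_singleton_iff, forall_eq, List.mem_cons (b := a), exists_eq_or_imp]
      rw [← not_or, not_not]

theorem sup_sAnd {P : Type} (M : InModel P) (s : Set M.W) (X : Set (Form P)) (hX : X.Finite) :
    support M (sAnd X) s ↔ ∀ φ ∈ X, support M φ s := by
  simp [sAnd, hX, sup_bigAnd]

theorem sup_sIdisj {P : Type} (M : InModel P) (s : Set M.W) (X : Set (Form P)) (hX : X.Finite) :
    support M (sIdisj X) s ↔ s = ∅ ∨ ∃ φ ∈ X, support M φ s := by
  simp [sIdisj, hX, sup_bigIdisj]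

theorem sup_sOr {P : Type} (M : InModel P) (s : Set M.W) (X : Set (Form P)) (hX : X.Finite)
    (hl : ∀ φ ∈ X, TruthConditional φ) :
    support M (sOr X) s ↔ ∀ w ∈ s, ∃ φ ∈ X, support M φ {w} := by
  rw [sOr, dif_pos hX, sup_bigOr]
  · simp
  · simpa using hl

theorem tc_sAnd {P : Type} (X : Set (Form P)) (hl : ∀ φ ∈ X, TruthConditional φ) :
    TruthConditional (sAnd X) := by
  by_cases hX : X.Finite
  · intro M s
    simp only [truth, sup_sAnd _ _ X hX]
    constructor
    · intro h w hw φ hφ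
      exact (hl φ hφ M s).1 (h φ hφ) w hw
    · intro h φ hφ
      exact (hl φ hφ M s).2 fun w hw => h w hw φ hφ
  · rw [sAnd, dif_neg hX]; exact tc_bot

theorem tc_bigAnd {P : Type} (l : List (Form P)) (hl : ∀ φ ∈ l, TruthConditional φ) :
    TruthConditional (bigAnd l) := by
  intro M s
  simp only [truth, sup_bigAnd]
  constructor
  · intro h w hw φ hφ
    exact (hl φ hφ M s).1 (h φ hφ) w hw
  · intro h φ hφ
    exact (hl φ hφ M s).2 fun w hw => h w hw φ hφ

theorem tc_chiZero {P : Type} [Fintype P] (M : InModel P) (w : M.W) :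
    TruthConditional (chiZero M w) := by
  apply tc_bigAnd
  intro φ hφ
  obtain ⟨p, -, rfl⟩ := List.mem_map.1 hφ
  split_ifs
  · exact tc_atom p
  · exact tc_neg _

theorem sup_chiZero {P : Type} [Fintype P] (M M' : InModel P) (w : M.W) (w' : M'.W) :
    support M (chiZero M' w') {w} ↔ ∀ p, M.V w p = M'.V w' p := by
  rw [chiZero, sup_bigAnd]
  simp only [List.mem_map, Finset.mem_toList, Finset.mem_univ, true_and, forall_exists_index,
    forall_apply_eq_imp_iff]
  refine forall_congr' fun p => ?_
  cases h : M'.V w' p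
  · simp [sup_neg, support]
  · simp [support]

theorem tc_chi {P : Type} [Fintype P] (n : ℕ) (M : InModel P) (w : M.W) :
    TruthConditional (chi n M w) := by
  cases n with
  | zero => exact tc_chiZero M w
  | succ n =>
    refine tc_and (tc_and (tc_chiZero M w) (tc_sAnd _ ?_)) (tc_sAnd _ ?_)
    · rintro φ ⟨s, -, rfl⟩; exact tc_neg _
    · rintro φ ⟨M', s', rfl, -⟩; exact tc_neg _

theorem IsNBisim.mono {P : Type} {M M' : InModel P} {n m : ℕ} {Z : ℕ → M.W → M'.W → Prop}
    (h : IsNBisim M M' n Z) (hm : m ≤ n) : IsNBisim M M' m Z :=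
  fun i hi => h i (hi.trans hm)

theorem EM.mono {P : Type} {M M' : InModel P} {Z Z' : M.W → M'.W → Prop}
    (h : ∀ w w', Z w w' → Z' w w') {s s'} (hs : EM Z s s') : EM Z' s s' :=
  ⟨fun w hw => (hs.1 w hw).imp fun _ a => ⟨a.1, h _ _ a.2⟩,
   fun w hw => (hs.2 w hw).imp fun _ a => ⟨a.1, h _ _ a.2⟩⟩

theorem canon {P : Type} (M M' : InModel P) (n : ℕ) :
    IsNBisim M M' n (fun i w w' => NBisimW i M w M' w') := by
  rintro i - w w' ⟨Z, hZ, hw⟩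
  obtain ⟨h1, h2⟩ := hZ i le_rfl w w' hw
  refine ⟨h1, ?_⟩
  rintro j rfl
  have key : ∀ v v', Z j v v' → NBisimW j M v M' v' :=
    fun v v' h => ⟨Z, hZ.mono (Nat.le_succ j), h⟩
  obtain ⟨h3, h4⟩ := h2 j rfl
  exact ⟨fun s hs => (h3 s hs).imp fun _ a => ⟨a.1, a.2.mono key⟩,
    fun s hs => (h4 s hs).imp fun _ a => ⟨a.1, a.2.mono key⟩⟩

theorem nbS_iff {P : Type} (n : ℕ) (M M' : InModel P) (s : Set M.W) (s' : Set M'.W) :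
    NBisimS n M s M' s' ↔ EM (fun w w' => NBisimW n M w M' w') s s' := by
  constructor
  · rintro ⟨Z, hZ, h⟩
    exact h.mono fun v v' hv => ⟨Z, hZ, hv⟩
  · intro h
    exact ⟨_, canon M M' n, h⟩

theorem nbW_zero {P : Type} (M M' : InModel P) (w : M.W) (w' : M'.W) :
    NBisimW 0 M w M' w' ↔ ∀ p, M.V w p = M'.V w' p := by
  constructor
  · rintro ⟨Z, hZ, h⟩
    exact (hZ 0 le_rfl w w' h).1
  · intro h
    refine ⟨fun _ v v' => ∀ p, M.V v p = M'.V v' p, ?_, h⟩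
    intro i hi v v' hv
    exact ⟨hv, fun j hj => by omega⟩

theorem nbW_succ {P : Type} (n : ℕ) (M M' : InModel P) (w : M.W) (w' : M'.W) :
    NBisimW (n + 1) M w M' w' ↔ (∀ p, M.V w p = M'.V w' p) ∧
      (∀ s ∈ M.Nb w, ∃ s' ∈ M'.Nb w', NBisimS n M s M' s') ∧
      (∀ s' ∈ M'.Nb w', ∃ s ∈ M.Nb w, NBisimS n M s M' s') := by
  simp only [nbS_iff]
  constructor
  · intro h
    obtain ⟨h1, h2⟩ := canon M M' (n + 1) (n + 1) le_rfl w w' h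
    exact ⟨h1, h2 n rfl⟩
  · rintro ⟨h1, h2⟩
    refine ⟨fun i v v' => (i = n + 1 ∧ v = w ∧ v' = w') ∨ (i ≤ n ∧ NBisimW i M v M' v'),
      ?_, Or.inl ⟨rfl, rfl, rfl⟩⟩
    rintro i hi v v' (⟨rfl, rfl, rfl⟩ | ⟨hin, hv⟩)
    · refine ⟨h1, ?_⟩
      intro j hj
      obtain rfl : n = j := by omega
      have key : ∀ a b, NBisimW n M a M' b →
          ((n = n + 1 ∧ a = v ∧ b = v') ∨ (n ≤ n ∧ NBisimW n M a M' b)) :=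
        fun a b h => Or.inr ⟨le_rfl, h⟩
      exact ⟨fun s hs => (h2.1 s hs).imp fun _ a => ⟨a.1, a.2.mono key⟩,
        fun s hs => (h2.2 s hs).imp fun _ a => ⟨a.1, a.2.mono key⟩⟩
    · obtain ⟨h3, h4⟩ := canon M M' i i le_rfl v v' hv
      refine ⟨h3, ?_⟩
      rintro j rfl
      obtain ⟨h5, h6⟩ := h4 j rfl
      have key : ∀ a b, NBisimW j M a M' b →
          ((j = n + 1 ∧ a = w ∧ b = w') ∨ (j ≤ n ∧ NBisimW j M a M' b)) :=
        fun a b h => Or.inr ⟨by omega, h⟩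
      exact ⟨fun s hs => (h5 s hs).imp fun _ a => ⟨a.1, a.2.mono key⟩,
        fun s hs => (h6 s hs).imp fun _ a => ⟨a.1, a.2.mono key⟩⟩

theorem nbW_refl {P : Type} (n : ℕ) (M : InModel P) (w : M.W) : NBisimW n M w M w := by
  refine ⟨fun _ v v' => v = v', ?_, rfl⟩
  rintro i - v _ rfl
  exact ⟨fun _ => rfl, fun j _ => ⟨fun s hs => ⟨s, hs, fun a ha => ⟨a, ha, rfl⟩,
    fun a ha => ⟨a, ha, rfl⟩⟩, fun s hs => ⟨s, hs, fun a ha => ⟨a, ha, rfl⟩,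
    fun a ha => ⟨a, ha, rfl⟩⟩⟩⟩

theorem nbS_refl {P : Type} (n : ℕ) (M : InModel P) (s : Set M.W) : NBisimS n M s M s := by
  rw [nbS_iff]
  exact ⟨fun a ha => ⟨a, ha, nbW_refl n M a⟩, fun a ha => ⟨a, ha, nbW_refl n M a⟩⟩

theorem nbS_symm {P : Type} {n : ℕ} {M M' : InModel P} {s : Set M.W} {s' : Set M'.W}
    (h : NBisimS n M s M' s') : NBisimS n M' s' M s := by
  obtain ⟨Z, hZ, h⟩ := h
  refine ⟨fun i a b => Z i b a, ?_, h.2, h.1⟩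
  intro i hi v v' hv
  obtain ⟨h1, h2⟩ := hZ i hi v' v hv
  refine ⟨fun p => (h1 p).symm, fun j hj => ?_⟩
  obtain ⟨h3, h4⟩ := h2 j hj
  exact ⟨fun s hs => (h4 s hs).imp fun _ a => ⟨a.1, a.2.2, a.2.1⟩,
    fun s hs => (h3 s hs).imp fun _ a => ⟨a.1, a.2.2, a.2.1⟩⟩

theorem EM.comp {P : Type} {M M' M'' : InModel P} {Z : M.W → M'.W → Prop}
    {Y : M'.W → M''.W → Prop} {s s' s''} (h : EM Z s s') (h' : EM Y s' s'') :
    EM (fun a c => ∃ b, Z a b ∧ Y b c) s s'' := by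
  constructor
  · intro a ha
    obtain ⟨b, hb, hab⟩ := h.1 a ha
    obtain ⟨c, hc, hbc⟩ := h'.1 b hb
    exact ⟨c, hc, b, hab, hbc⟩
  · intro c hc
    obtain ⟨b, hb, hbc⟩ := h'.2 c hc
    obtain ⟨a, ha, hab⟩ := h.2 b hb
    exact ⟨a, ha, b, hab, hbc⟩

theorem nbS_trans {P : Type} {n : ℕ} {M M' M'' : InModel P} {s : Set M.W} {s' : Set M'.W}
    {s'' : Set M''.W} (h : NBisimS n M s M' s') (h' : NBisimS n M' s' M'' s'') :
    NBisimS n M s M'' s'' := by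
  obtain ⟨Z, hZ, h⟩ := h
  obtain ⟨Y, hY, h'⟩ := h'
  refine ⟨fun i a c => ∃ b, Z i a b ∧ Y i b c, ?_, h.comp h'⟩
  rintro i hi a c ⟨b, hab, hbc⟩
  obtain ⟨h1, h2⟩ := hZ i hi a b hab
  obtain ⟨h3, h4⟩ := hY i hi b c hbc
  refine ⟨fun p => (h1 p).trans (h3 p), fun j hj => ⟨fun s hs => ?_, fun s hs => ?_⟩⟩
  · obtain ⟨t, ht, e⟩ := (h2 j hj).1 s hs
    obtain ⟨u, hu, e'⟩ := (h4 j hj).1 t ht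
    exact ⟨u, hu, e.comp e'⟩
  · obtain ⟨t, ht, e⟩ := (h4 j hj).2 s hs
    obtain ⟨u, hu, e'⟩ := (h2 j hj).2 t ht
    exact ⟨u, hu, e'.comp e⟩

theorem pi_finite {P : Type} [Fintype P] (n : ℕ)
    (h : Set.Finite {f : Form P | ∃ (M : InModel P) (w : M.W), f = chi n M w}) :
    Set.Finite {f : Form P | ∃ (M : InModel P) (s : Set M.W), f = piChar n M s} := by
  refine (h.finite_subsets.image
    (fun X => Form.neg (Form.yields (sOr X) (sIdisj (Form.neg '' X))))).subset ?_
  rintro f ⟨M, s, rfl⟩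
  refine ⟨{f | ∃ w ∈ s, f = chi n M w}, ?_, ?_⟩
  · rintro f ⟨w, -, rfl⟩; exact ⟨M, w, rfl⟩
  · have e : Form.neg '' {f | ∃ w ∈ s, f = chi n M w} =
        {f | ∃ w ∈ s, f = Form.neg (chi n M w)} := by
      ext f
      constructor
      · rintro ⟨_, ⟨w, hw, rfl⟩, rfl⟩; exact ⟨w, hw, rfl⟩
      · rintro ⟨w, hw, rfl⟩; exact ⟨_, ⟨w, hw, rfl⟩, rfl⟩
    dsimp only
    rw [e]
    rfl

theorem chiZero_finite {P : Type} [Fintype P] :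
    Set.Finite {f : Form P | ∃ (M : InModel P) (w : M.W), f = chiZero M w} := by
  refine (Set.finite_range (fun v : P → Bool => bigAnd ((Finset.univ : Finset P).toList.map
    (fun p => if v p then Form.atom p else Form.neg (Form.atom p))))).subset ?_
  rintro f ⟨M, w, rfl⟩
  exact ⟨M.V w, rfl⟩

theorem chi_finite {P : Type} [Fintype P] (n : ℕ) :
    Set.Finite {f : Form P | ∃ (M : InModel P) (w : M.W), f = chi n M w} := by
  induction n with
  | zero => exact chiZero_finite
  | succ n ih =>
    have hp := pi_finite n ih
    refine ((chiZero_finite.prod (hp.finite_subsets.prod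
      (hp.image Form.neg).finite_subsets)).image
      (fun x : Form P × Set (Form P) × Set (Form P) =>
        Form.and (Form.and x.1 (sAnd x.2.1)) (sAnd x.2.2))).subset ?_
    rintro f ⟨M, w, rfl⟩
    refine ⟨(chiZero M w, {f | ∃ s ∈ M.Nb w, f = piAux (chi n) M s},
      {f | ∃ (M' : InModel P) (s' : Set M'.W),
          f = Form.neg (piAux (chi n) M' s') ∧ ¬ ∃ s ∈ M.Nb w, NBisimS n M s M' s'}),
      ⟨⟨M, w, rfl⟩, ?_, ?_⟩, rfl⟩
    · rintro f ⟨s, -, rfl⟩; exact ⟨M, s, rfl⟩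
    · rintro f ⟨M', s', rfl, -⟩; exact ⟨_, ⟨M', s', rfl⟩, rfl⟩

theorem pi_truth {P : Type} [Fintype P] (n : ℕ)
    (h : ∀ (M M' : InModel P) (w : M.W) (w' : M'.W),
      truth M w (chi n M' w') ↔ NBisimW n M w M' w')
    (M M' : InModel P) (w : M.W) (s' : Set M'.W) :
    truth M w (piChar n M' s') ↔ ∃ s ∈ M.Nb w, NBisimS n M s M' s' := by
  have f1 : Set.Finite {f | ∃ w ∈ s', f = chi n M' w} :=
    (chi_finite n).subset (by rintro f ⟨w, -, rfl⟩; exact ⟨M', w, rfl⟩)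
  have f2 : Set.Finite {f | ∃ w ∈ s', f = Form.neg (chi n M' w)} :=
    ((chi_finite n).image Form.neg).subset
      (by rintro f ⟨w, -, rfl⟩; exact ⟨_, ⟨M', w, rfl⟩, rfl⟩)
  have e : ∀ (φ ψ : Form P) s, support M (Form.yields φ ψ) s ↔
    ∀ w ∈ s, ∀ t ∈ M.Nb w, support M φ t → support M ψ t := fun _ _ _ => Iff.rfl
  simp only [truth] at h
  rw [truth, piChar, piAux, sup_neg]
  simp only [Set.mem_singleton_iff, forall_eq, e]
  push Not
  refine exists_congr fun t => and_congr_right fun ht => ?_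
  have htn := (M.nb_nonempty w t ht).ne_empty
  rw [sup_sOr M t _ f1 (by rintro φ ⟨w, -, rfl⟩; exact tc_chi n M' w), sup_sIdisj M t _ f2, nbS_iff]
  refine and_congr ?_ ?_
  · refine forall₂_congr fun v hv => ?_
    constructor
    · rintro ⟨_, ⟨w', hw', rfl⟩, hs⟩
      exact ⟨w', hw', (h _ _ _ _).1 hs⟩
    · rintro ⟨w', hw', hs⟩
      exact ⟨_, ⟨w', hw', rfl⟩, (h _ _ _ _).2 hs⟩
  · constructor
    · intro hn w' hw'
      by_contra hc
      refine hn (Or.inr ⟨_, ⟨w', hw', rfl⟩, (sup_neg _ _ _).2 fun v hv hs => hc ?_⟩)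
      exact ⟨v, hv, (h _ _ _ _).1 hs⟩
    · rintro hb (h0 | ⟨_, ⟨w', hw', rfl⟩, hs⟩)
      · exact htn h0
      · obtain ⟨v, hv, hvw⟩ := hb w' hw'
        exact (sup_neg _ _ _).1 hs v hv ((h _ _ _ _).2 hvw)

theorem chi_truth {P : Type} [Fintype P] (n : ℕ) :
    ∀ (M M' : InModel P) (w : M.W) (w' : M'.W),
      truth M w (chi n M' w') ↔ NBisimW n M w M' w' := by
  induction n with
  | zero =>
    intro M M' w w'
    rw [nbW_zero]
    exact sup_chiZero M M' w w'
  | succ n ih =>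
    intro M M' w w'
    have hp := pi_truth n ih
    have hf := pi_finite (P := P) n (chi_finite n)
    have f1 : Set.Finite {f | ∃ s ∈ M'.Nb w', f = piAux (chi n) M' s} :=
      hf.subset (by rintro f ⟨s, -, rfl⟩; exact ⟨M', s, rfl⟩)
    have f2 : Set.Finite {f | ∃ (M'' : InModel P) (s' : Set M''.W),
          f = Form.neg (piAux (chi n) M'' s') ∧ ¬ ∃ s ∈ M'.Nb w', NBisimS n M' s M'' s'} :=
      (hf.image Form.neg).subset
        (by rintro f ⟨M'', s, rfl, -⟩; exact ⟨_, ⟨M'', s, rfl⟩, rfl⟩)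
    have e : ∀ (φ ψ : Form P) s,
        support M (Form.and φ ψ) s ↔ support M φ s ∧ support M ψ s := fun _ _ _ => Iff.rfl
    rw [nbW_succ, truth, chi, e, e, sup_chiZero, sup_sAnd M _ _ f1, sup_sAnd M _ _ f2]
    constructor
    · rintro ⟨⟨h1, h2⟩, h3⟩
      refine ⟨h1, fun s hs => ?_, fun s' hs' => ?_⟩
      · by_contra hc
        have := h3 _ ⟨M, s, rfl, fun ⟨s', hs', hb⟩ => hc ⟨s', hs', nbS_symm hb⟩⟩
        rw [sup_neg] at this
        exact this w rfl ((hp M M w s).2 ⟨s, hs, nbS_refl n M s⟩)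
      · exact (hp M M' w s').1 (h2 _ ⟨s', hs', rfl⟩)
    · rintro ⟨h1, h2, h3⟩
      refine ⟨⟨h1, ?_⟩, ?_⟩
      · rintro _ ⟨s', hs', rfl⟩
        exact (hp M M' w s').2 (h3 s' hs')
      · rintro _ ⟨M'', s'', rfl, hn⟩
        rw [sup_neg]
        rintro v rfl hv
        obtain ⟨t, ht, hb⟩ := (hp M M'' v s'').1 hv
        obtain ⟨t', ht', hb'⟩ := h2 t ht
        exact hn ⟨t', ht', nbS_trans (nbS_symm hb') hb⟩

/-- the characteristic formulas are well-defined (for each `n`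
there are only finitely many distinct formulas `χⁿ` and `πⁿ`, so all
conjunctions and disjunctions in their definition are over finite sets of
formulas), `χⁿ_{M',w'}` defines `n`-bisimilarity to `⟨M',w'⟩`, and `πⁿ_{M',s'}`
defines having a neighborhood `n`-bisimilar to `⟨M',s'⟩`. -/
theorem characteristic_formulas {P : Type} [Fintype P] (n : ℕ) :
    (Set.Finite {f : Form P | ∃ (M : InModel P) (w : M.W), f = chi n M w}) ∧
    (Set.Finite {f : Form P | ∃ (M : InModel P) (s : Set M.W), f = piChar n M s}) ∧
    (∀ (M M' : InModel P) (w : M.W) (w' : M'.W),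
      truth M w (chi n M' w') ↔ NBisimW n M w M' w') ∧
    (∀ (M M' : InModel P) (w : M.W) (s' : Set M'.W),
      truth M w (piChar n M' s') ↔ ∃ s ∈ M.Nb w, NBisimS n M s M' s') := by
  exact ⟨chi_finite n, pi_finite n (chi_finite n), chi_truth n, pi_truth n (chi_truth n)⟩
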